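/- arXiv:2109.01795 — 2 statements merged into one kernel-verified Lean document; each statement's English description precedes it below -/
import Mathlib

section
/- For any finite discounted stochastic game, the map f on strategy profiles has at least one fixed point; consequently, every finite discounted stochastic game possesses a Markov perfect equilibrium. -/
/-!
The map `f` is a continuous self-map of the set of strategy profiles, a product of simplices, so
Brouwer's theorem gives a fixed point; at a fixed point no pure deviation is profitable, which
makes it an equilibrium.

*Brouwer.* Scarf's lemma (`scarf`) is a parity argument on dominant sets for a family of linear
orders. A dominant set one element short of full size extends to a full-size one in exactly two
ways (`scarf_two_rooms`), apart from one exceptional set of slacks, which extends in one way; if no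
dominant set carried all colours, each relevant full-size set would contain exactly two smaller
ones, and double counting would equate an odd and an even number. Applied to the coordinate orders
on the points of the simplex with denominator `k`, coloured by a coordinate that `F` does not
decrease, it yields nearby points with `F x ≥ x - ε` in every coordinate (`grid_coloring`), and
compactness gives `F x ≥ x`, that is `F x = x` (`brouwer_stdSimplex`). The profiles, rescaled to
total mass one, are a retract of a simplex (`SG.retr`), so the theorem carries over to them.

*Equilibrium.* Since `γ < 1`, a function with `d ≤ γ P^π d` is nonpositive (`SG.max_principle`).
Hence `1 - γ P^π` is invertible, values depend continuously on the profile, and super- and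
subsolutions of the Bellman equation bound the value. In particular a pure deviation at `s` raises
the value at `s` iff it raises the one-shot value (`SG.V_lt_Vdev_iff`). As `V s` is the average of
the one-shot values over the actions played at `s`, the improvements `D` cannot all be positive on
the support; but `f π = π` forces `D a = π a * ∑ D`, so `D = 0`, and the comparison principle rules
out every deviation (`SG.isMPE_of_fixed`).
-/

open Finset

/-- A finite discounted stochastic game with `n` agents, `S` states and
action counts `A i` for each agent `i`. -/
structure SG (n S : ℕ) (A : Fin n → ℕ) where
  P : Fin S → (∀ i, Fin (A i)) → Fin S → ℝ
  r : Fin n → Fin S → (∀ i, Fin (A i)) → ℝ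
  Rmax : ℝ
  γ : ℝ
  P_nonneg : ∀ s a s', 0 ≤ P s a s'
  P_sum_one : ∀ s a, ∑ s', P s a s' = 1
  r_nonneg : ∀ i s a, 0 ≤ r i s a
  r_le_Rmax : ∀ i s a, r i s a ≤ Rmax
  γ_nonneg : 0 ≤ γ
  γ_lt_one : γ < 1

namespace SG

variable {n S : ℕ} {A : Fin n → ℕ}

/-- A (behavioral) strategy profile: agent `i` plays at state `s` the distribution
`π i s` on its actions. -/
abbrev Profile (n S : ℕ) (A : Fin n → ℕ) := ∀ i : Fin n, Fin S → Fin (A i) → ℝ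

/-- `π` is a genuine strategy profile: each `π i s` is a probability distribution. -/
def IsProfile (π : Profile n S A) : Prop :=
  (∀ i s a, 0 ≤ π i s a) ∧ ∀ i s, ∑ a, π i s a = 1

/-- `A_max`, the largest number of actions of any agent. -/
def Amax (A : Fin n → ℕ) : ℕ := Finset.univ.sup A

/-- Probability of the joint action `a` at state `s` under profile `π`. -/
def jointProb (π : Profile n S A) (s : Fin S) (a : ∀ i, Fin (A i)) : ℝ :=
  ∏ i, π i s (a i)

/-- The state-transition matrix `P^π` induced by the profile `π`. -/
noncomputable def Pmat (g : SG n S A) (π : Profile n S A) : Matrix (Fin S) (Fin S) ℝ :=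
  fun s s' => ∑ a, jointProb π s a * g.P s a s'

/-- Expected one-step reward `r^{i,π}(s)` of agent `i` at state `s` under `π`. -/
noncomputable def rvec (g : SG n S A) (π : Profile n S A) (i : Fin n) (s : Fin S) : ℝ :=
  ∑ a, jointProb π s a * g.r i s a

/-- The value function `V^{π^i,π^{-i}}` of agent `i` under profile `π`: the unique
solution of the Bellman equation `V = r^{i,π} + γ P^π V`, i.e. `(I − γP^π)⁻¹ r^{i,π}`. -/
noncomputable def V (g : SG n S A) (π : Profile n S A) (i : Fin n) : Fin S → ℝ :=
  Matrix.mulVec (1 - g.γ • g.Pmat π)⁻¹ (g.rvec π i)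

/-- The profile obtained from `π` by letting agent `i` play the pure action `a`
at state `s` (and `π i` at every other state). -/
def devProfile (π : Profile n S A) (i : Fin n) (s : Fin S) (a : Fin (A i)) : Profile n S A :=
  Function.update π i (fun t b => if t = s then (if b = a then (1 : ℝ) else 0) else π i t b)

/-- The one-step-deviation value `V^{π^i,π^{-i}}_{π^i(s,a)=1}(s)`. -/
noncomputable def Vdev (g : SG n S A) (π : Profile n S A) (i : Fin n) (s : Fin S)
    (a : Fin (A i)) : ℝ :=
  g.V (devProfile π i s a) i s

/-- `D^{π}_{a}(s) = max(0, V^{π^i,π^{-i}}_{π^i(s,a)=1}(s) − V^{π^i,π^{-i}}(s))`. -/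
noncomputable def D (g : SG n S A) (π : Profile n S A) (i : Fin n) (s : Fin S)
    (a : Fin (A i)) : ℝ :=
  max 0 (g.Vdev π i s a - g.V π i s)

/-- Nash's improvement map `f` on strategy profiles. -/
noncomputable def f (g : SG n S A) (π : Profile n S A) : Profile n S A :=
  fun i s a => (π i s a + g.D π i s a) / (1 + ∑ b, g.D π i s b)

/-- `π` is a Markov perfect equilibrium: no agent can improve its value at any state
by unilaterally switching to another behavioral strategy. -/
def IsMPE (g : SG n S A) (π : Profile n S A) : Prop :=
  ∀ (s : Fin S) (i : Fin n) (σ : Fin S → Fin (A i) → ℝ),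
    ((∀ t b, 0 ≤ σ t b) ∧ ∀ t, ∑ b, σ t b = 1) →
    g.V (Function.update π i σ) i s ≤ g.V π i s

/-- `π` is an `ε`-approximate Markov perfect equilibrium. -/
def IsApproxMPE (g : SG n S A) (π : Profile n S A) (ε : ℝ) : Prop :=
  ∀ (s : Fin S) (i : Fin n) (σ : Fin S → Fin (A i) → ℝ),
    ((∀ t b, 0 ≤ σ t b) ∧ ∀ t, ∑ b, σ t b = 1) →
    g.V (Function.update π i σ) i s - ε ≤ g.V π i s

end SG

/-! ### Scarf's lemma -/

section Scarf

variable {W I : Type*}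

/-- `X` is dominant for the family of orders on `W` given by the injective ranks `u i`: every
`y : W` lies weakly below all of `X` in at least one of the orders. -/
def ScarfDom (u : I → W → ℕ) (X : Finset W) : Prop :=
  ∀ y, ∃ i, ∀ x ∈ X, u i y ≤ u i x

theorem ScarfDom.mono {u : I → W → ℕ} {X Y : Finset W} (h : ScarfDom u X) (hYX : Y ⊆ X) :
    ScarfDom u Y := fun y => by
  obtain ⟨i, hi⟩ := h y
  exact ⟨i, fun x hx => hi x (hYX hx)⟩

/-- `m l` is the `l`-lowest element of the dominant set `Y`. If `y` is `k`-highest among the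
elements above `m l` in every order `l ≠ k`, then adding `y` to `Y` preserves dominance. -/
theorem scarf_insert_dom [DecidableEq W] {u : I → W → ℕ} {Y : Finset W} (hY : ScarfDom u Y)
    {m : I → W}
    (hm : ∀ l, ∀ x ∈ Y, u l (m l) ≤ u l x) {k : I} {y : W}
    (hy : ∀ l, l ≠ k → u l (m l) < u l y)
    (hmax : ∀ z, (∀ l, l ≠ k → u l (m l) < u l z) → u k z ≤ u k y) (hmY : ∀ l, m l ∈ Y) :
    ScarfDom u (insert y Y) := by
  intro z
  by_contra hcon
  push Not at hcon
  have hz : ∀ l, l ≠ k → u l (m l) < u l z := by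
    intro l hl
    obtain ⟨x, hx, hxz⟩ := hcon l
    rcases Finset.mem_insert.1 hx with rfl | hx
    · exact (hy l hl).trans hxz
    · exact (hm l x hx).trans_lt hxz
  have hzk := hmax z hz
  obtain ⟨x, hx, hxz⟩ := hcon k
  rcases Finset.mem_insert.1 hx with rfl | hx
  · omega
  · obtain ⟨l, hl⟩ := hY z
    have h1 := hl (m l) (hmY l)
    by_cases hlk : l = k
    · subst hlk
      have := hm l x hx
      omega
    · have := hz l hlk
      omega

/-- If `m i = m j` is the only coincidence among the order-wise minima of `Y`, then a dominant
extension of `Y` by a `y` that is not `j`-lowest is the one of `scarf_insert_dom` for `k = i`. -/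
theorem scarf_insert_unique [DecidableEq W] {u : I → W → ℕ} (hu : ∀ i, Function.Injective (u i))
    {Y : Finset W} {m : I → W}
    (hm : ∀ l, ∀ x ∈ Y, u l (m l) ≤ u l x) (hmY : ∀ l, m l ∈ Y) {i j : I}
    (huniq : ∀ k l, m k = m l → k = l ∨ (k = i ∧ l = j) ∨ (k = j ∧ l = i))
    {y y' : W} (hyY : y ∉ Y) (hdom : ScarfDom u (insert y Y))
    (hj : u j (m j) < u j y)
    (hy' : ∀ l, l ≠ i → u l (m l) < u l y')
    (hmax : ∀ z, (∀ l, l ≠ i → u l (m l) < u l z) → u i z ≤ u i y') : y = y' := by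
  have hyM : ∀ l, l ≠ i → u l (m l) < u l y := by
    intro l hl
    obtain ⟨l1, h1⟩ := hdom (m l)
    have heq : m l1 = m l := hu l1 (le_antisymm (hm l1 _ (hmY l))
      (h1 _ (Finset.mem_insert_of_mem (hmY l1))))
    have hlt : u l1 (m l1) < u l1 y := by
      rw [heq]
      refine lt_of_le_of_ne (h1 y (Finset.mem_insert_self _ _)) fun h => hyY ?_
      rw [← hu l1 h]; exact hmY l
    rcases huniq _ _ heq with h | ⟨h, h'⟩ | ⟨h, h'⟩
    · rwa [h] at hlt
    · rw [h']; exact hj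
    · exact absurd h' hl
  obtain ⟨l, hl⟩ := hdom y'
  have hli : l = i := by
    by_contra hli
    have := hy' l hli
    have := hl (m l) (Finset.mem_insert_of_mem (hmY l))
    omega
  subst hli
  exact hu l (le_antisymm (hmax y hyM) (hl y (Finset.mem_insert_self _ _)))

/-- A dominant set with one element fewer than there are orders, containing an element `t` that
lies below `s k` in every order `l ≠ k`, extends to a dominant set by one more element in exactly
two ways. -/
theorem scarf_two_rooms [Fintype W] [DecidableEq W] [Fintype I] [DecidableEq I]
    {u : I → W → ℕ} (hu : ∀ i, Function.Injective (u i)) {s : I → W}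
    {Y : Finset W} (hYc : Y.card + 1 = Fintype.card I) (hY : ScarfDom u Y) {t : W} (ht : t ∈ Y)
    (hst : ∀ k l, l ≠ k → u l t < u l (s k)) :
    ∃ a b, a ≠ b ∧ a ∉ Y ∧ b ∉ Y ∧
      ∀ y, y ∉ Y → (ScarfDom u (insert y Y) ↔ y = a ∨ y = b) := by
  have hmex : ∀ l, ∃ x ∈ Y, ∀ x' ∈ Y, u l x ≤ u l x' := fun l =>
    Finset.exists_min_image Y (u l) ⟨t, ht⟩
  choose m hmY hm using hmex
  have hsurj : ∀ x ∈ Y, ∃ l, m l = x := by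
    intro x hx
    obtain ⟨l, hl⟩ := hY x
    exact ⟨l, hu l (le_antisymm (hm l x hx) (hl _ (hmY l)))⟩
  obtain ⟨i, -, j, -, hij, hmij⟩ := Finset.exists_ne_map_eq_of_card_lt_of_maps_to
    (s := (Finset.univ : Finset I)) (t := Y) (f := m) (by rw [Finset.card_univ]; omega)
    (fun l _ => hmY l)
  -- Deleting either of `i`, `j` leaves `m` surjective onto a set of equal size, hence injective.
  have hinj : ∀ p q, p ≠ q → m p = m q → Set.InjOn m (Finset.univ.erase p : Finset I) := by
    intro p q hpq hmpq
    apply Finset.injOn_of_surjOn_of_card_le m (t := Y)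
    · intro l _; exact hmY l
    · intro x hx
      obtain ⟨l, rfl⟩ := hsurj x hx
      by_cases h : l = p
      · exact ⟨q, by simpa using hpq.symm, by rw [h, hmpq]⟩
      · exact ⟨l, by simpa using h, rfl⟩
    · rw [Finset.card_erase_of_mem (Finset.mem_univ _), Finset.card_univ]; omega
  have huniq : ∀ k l, m k = m l → k = l ∨ (k = i ∧ l = j) ∨ (k = j ∧ l = i) := by
    intro k l hkl
    have h1 := @hinj i j hij hmij k
    have h2 := @hinj j i hij.symm hmij.symm k
    by_contra hcon
    push Not at hcon
    have h1' : k = i ∨ l = i := by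
      by_contra hc; push Not at hc
      exact hcon.1 (h1 (by simpa using hc.1) (by simpa using hc.2) hkl)
    have h2' : k = j ∨ l = j := by
      by_contra hc; push Not at hc
      exact hcon.1 (h2 (by simpa using hc.1) (by simpa using hc.2) hkl)
    grind
  have hM : ∀ k, ∃ y, (∀ l, l ≠ k → u l (m l) < u l y) ∧
      ∀ z, (∀ l, l ≠ k → u l (m l) < u l z) → u k z ≤ u k y := by
    intro k
    have := Finset.exists_max_image
      (Finset.univ.filter fun y => ∀ l, l ≠ k → u l (m l) < u l y) (u k)
      ⟨s k, by simpa using fun l hl => (hm l t ht).trans_lt (hst k l hl)⟩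
    simpa using this
  obtain ⟨a, ha, ha'⟩ := hM i
  obtain ⟨b, hb, hb'⟩ := hM j
  refine ⟨a, b, ?_, ?_, ?_, ?_⟩
  · rintro rfl
    obtain ⟨l, hl⟩ := hY a
    have h1 := hl _ (hmY l)
    by_cases h : l = i
    · have := hb l (by rw [h]; exact hij); omega
    · have := ha l h; omega
  · intro h
    obtain ⟨l, hl⟩ := hsurj a h
    by_cases hli : l = i
    · have := ha j hij.symm; rw [← hmij, ← hli, hl] at this; omega
    · have := ha l hli; rw [hl] at this; omega
  · intro h
    obtain ⟨l, hl⟩ := hsurj b h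
    by_cases hli : l = j
    · have := hb i hij; rw [hmij, ← hli, hl] at this; omega
    · have := hb l hli; rw [hl] at this; omega
  · intro y hyY
    constructor
    · intro hdom
      obtain ⟨l, hl⟩ := hdom (m i)
      have heq : m l = m i := hu l (le_antisymm (hm l _ (hmY i))
        (hl _ (Finset.mem_insert_of_mem (hmY l))))
      have hlt : u l (m l) < u l y := by
        rw [heq]
        refine lt_of_le_of_ne (hl y (Finset.mem_insert_self _ _)) fun h => hyY ?_
        rw [← hu l h]; exact hmY i
      have hl' : l = i ∨ l = j := by have := huniq _ _ heq; grind
      rcases hl' with rfl | rfl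
      · right
        exact scarf_insert_unique hu hm hmY (fun k l h => by have := huniq k l h; grind)
          hyY hdom hlt hb hb'
      · left
        exact scarf_insert_unique hu hm hmY huniq hyY hdom hlt ha ha'
    · rintro (rfl | rfl)
      · exact scarf_insert_dom hY hm ha ha' hmY
      · exact scarf_insert_dom hY hm hb hb' hmY

/-- **Scarf's lemma.** The elements `s i` are slacks: `s i` is lowest in the order `i` and above
every non-slack in all other orders. Whatever the colouring `c` with `c (s i) = i`, some dominant
set carries all colours. -/
theorem scarf [Fintype W] [DecidableEq W] [Fintype I] [DecidableEq I]
    {u : I → W → ℕ} (hu : ∀ i, Function.Injective (u i)) {s : I → W}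
    (hs : ∀ i w, u i (s i) ≤ u i w)
    (hs' : ∀ i j w, w ∉ Set.range s → i ≠ j → u i w < u i (s j))
    {c : W → I} (hc : ∀ i, c (s i) = i) {w₀ : W} (hw₀ : w₀ ∉ Set.range s) (i₀ : I) :
    ∃ X : Finset W, ScarfDom u X ∧ X.image c = Finset.univ := by
  classical
  by_contra hno
  push Not at hno
  have hcard : 0 < Fintype.card I := Fintype.card_pos_iff.2 ⟨i₀⟩
  -- Full-size dominant sets carrying at least the colours other than `i₀`, and dominant sets one
  -- element smaller carrying exactly those colours; both sides of their incidence are counted.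
  set rooms : Finset (Finset W) := Finset.univ.filter fun X =>
    X.card = Fintype.card I ∧ ScarfDom u X ∧ Finset.univ.erase i₀ ⊆ X.image c with hrooms
  set doors : Finset (Finset W) := Finset.univ.filter fun Y =>
    Y.card + 1 = Fintype.card I ∧ ScarfDom u Y ∧ Y.image c = Finset.univ.erase i₀ with hdoors
  have hcount := Finset.sum_card_bipartiteAbove_eq_sum_card_bipartiteBelow
    (s := doors) (t := rooms) (fun Y X => Y ⊆ X)
  have herase : (Finset.univ.erase i₀ : Finset I).card + 1 = Fintype.card I := by
    rw [Finset.card_erase_of_mem (Finset.mem_univ _), Finset.card_univ]; omega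
  have hdoorRoom : ∀ Y ∈ doors, ∀ X ∈ rooms, Y ⊆ X → ∃ y, y ∉ Y ∧ insert y Y = X := by
    intro Y hY X hX hYX
    simp only [hrooms, hdoors, Finset.mem_filter, Finset.mem_univ, true_and] at hX hY
    obtain ⟨y, hy, h⟩ := Finset.exists_eq_insert_iff.2 ⟨hYX, by omega⟩
    exact ⟨y, hy, h⟩
  have hinsRoom : ∀ Y ∈ doors, ∀ y, y ∉ Y → ScarfDom u (insert y Y) → insert y Y ∈ rooms := by
    intro Y hY y hy hd
    simp only [hrooms, hdoors, Finset.mem_filter, Finset.mem_univ, true_and] at hY ⊢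
    refine ⟨by rw [Finset.card_insert_of_notMem hy]; exact hY.1, hd, ?_⟩
    rw [← hY.2.2]
    exact Finset.image_subset_image (Finset.subset_insert _ _)
  -- A room misses the colour `i₀`, so exactly one colour repeats and it has exactly two doors.
  have hroom2 : ∀ X ∈ rooms, (Finset.bipartiteBelow (fun Y X => Y ⊆ X) doors X).card = 2 := by
    intro X hX
    have hX0 := hX
    simp only [hrooms, Finset.mem_filter, Finset.mem_univ, true_and] at hX
    obtain ⟨hXc, hXd, hXi⟩ := hX
    have himg : X.image c = Finset.univ.erase i₀ := by
      refine (Finset.Subset.antisymm hXi ?_).symm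
      intro i hi
      refine Finset.mem_erase.2 ⟨?_, Finset.mem_univ _⟩
      rintro rfl
      refine hno X hXd (Finset.eq_univ_iff_forall.2 fun j => ?_)
      by_cases hj : j = i
      · rw [hj]; exact hi
      · exact hXi (by simpa using hj)
    obtain ⟨a, ha, b, hb, hab, hcab⟩ := Finset.exists_ne_map_eq_of_card_lt_of_maps_to
      (s := X) (t := Finset.univ.erase i₀) (f := c) (by omega)
      (fun x hx => by rw [← himg]; exact Finset.mem_image_of_mem c hx)
    have hdoor : ∀ a ∈ X, ∀ b ∈ X, a ≠ b → c a = c b → X.erase a ∈ doors := by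
      intro a ha b hb hab hcab
      simp only [hdoors, Finset.mem_filter, Finset.mem_univ, true_and]
      refine ⟨by rw [Finset.card_erase_of_mem ha]; omega, hXd.mono (Finset.erase_subset _ _), ?_⟩
      rw [← himg]
      refine Finset.Subset.antisymm (Finset.image_subset_image (Finset.erase_subset _ _)) ?_
      intro i hi
      obtain ⟨x, hx, rfl⟩ := Finset.mem_image.1 hi
      by_cases hxa : x = a
      · rw [hxa, hcab]; exact Finset.mem_image_of_mem c (Finset.mem_erase.2 ⟨hab.symm, hb⟩)
      · exact Finset.mem_image_of_mem c (Finset.mem_erase.2 ⟨hxa, hx⟩)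
    rw [Finset.card_eq_two]
    refine ⟨X.erase a, X.erase b, ?_, ?_⟩
    · intro h
      have : a ∈ X.erase b := Finset.mem_erase.2 ⟨hab, ha⟩
      rw [← h] at this
      simp at this
    · ext Y
      simp only [Finset.mem_bipartiteBelow, Finset.mem_insert, Finset.mem_singleton]
      constructor
      · rintro ⟨hY, hYX⟩
        obtain ⟨y, hyY, rfl⟩ := hdoorRoom Y hY X hX0 hYX
        simp only [hdoors, Finset.mem_filter, Finset.mem_univ, true_and] at hY
        have hinj : Set.InjOn c Y := Finset.card_image_iff.1 (by rw [hY.2.2]; omega)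
        have : y = a ∨ y = b := by
          by_contra hcon
          push Not at hcon
          have ha' : a ∈ Y := (Finset.mem_insert.1 ha).resolve_left hcon.1.symm
          have hb' : b ∈ Y := (Finset.mem_insert.1 hb).resolve_left hcon.2.symm
          exact hab (hinj ha' hb' hcab)
        rcases this with rfl | rfl
        · left; rw [Finset.erase_insert hyY]
        · right; rw [Finset.erase_insert hyY]
      · rintro (rfl | rfl)
        · exact ⟨hdoor a ha b hb hab hcab, Finset.erase_subset _ _⟩
        · exact ⟨hdoor b hb a ha hab.symm hcab.symm, Finset.erase_subset _ _⟩
  have hsinj : Function.Injective s := fun i j h => by rw [← hc i, h, hc]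
  set Y₀ : Finset W := (Finset.univ.erase i₀).image s with hY₀
  have hY₀d : Y₀ ∈ doors := by
    simp only [hdoors, Finset.mem_filter, Finset.mem_univ, true_and]
    refine ⟨by rw [hY₀, Finset.card_image_of_injective _ hsinj]; exact herase, ?_, ?_⟩
    · intro y
      by_cases hy : y ∈ Set.range s
      · obtain ⟨j, rfl⟩ := hy
        exact ⟨j, fun x _ => hs j x⟩
      · refine ⟨i₀, fun x hx => ?_⟩
        obtain ⟨j, hj, rfl⟩ := Finset.mem_image.1 hx
        exact (hs' i₀ j y hy (Finset.ne_of_mem_erase hj).symm).le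
    · rw [hY₀, Finset.image_image]
      have : c ∘ s = id := funext hc
      rw [this, Finset.image_id]
  have hdoor2 : ∀ Y ∈ doors, Y ≠ Y₀ →
      (Finset.bipartiteAbove (fun Y X => Y ⊆ X) rooms Y).card = 2 := by
    intro Y hY hne
    have hY' := hY
    simp only [hdoors, Finset.mem_filter, Finset.mem_univ, true_and] at hY'
    obtain ⟨hYc, hYd, hYi⟩ := hY'
    have hex : ∃ t ∈ Y, t ∉ Set.range s := by
      by_contra hcon
      push Not at hcon
      refine hne ?_
      rw [hY₀, ← hYi, Finset.image_image]
      refine (Finset.image_congr (g := id) ?_).trans Finset.image_id |>.symm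
      intro x hx
      obtain ⟨j, rfl⟩ := hcon x hx
      simp [hc]
    obtain ⟨t, htY, ht⟩ := hex
    obtain ⟨a, b, hab, ha, hb, hiff⟩ := scarf_two_rooms hu (s := s) hYc hYd htY
      (fun k l hkl => hs' l k t ht hkl)
    rw [Finset.card_eq_two]
    refine ⟨insert a Y, insert b Y, ?_, ?_⟩
    · intro h
      have : a ∈ insert b Y := by rw [← h]; exact Finset.mem_insert_self _ _
      exact (Finset.mem_insert.1 this).elim hab ha
    · ext X
      simp only [Finset.mem_bipartiteAbove, Finset.mem_insert, Finset.mem_singleton]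
      constructor
      · rintro ⟨hX, hYX⟩
        obtain ⟨y, hy, rfl⟩ := hdoorRoom Y hY X hX hYX
        simp only [hrooms, Finset.mem_filter, Finset.mem_univ, true_and] at hX
        rcases (hiff y hy).1 hX.2.1 with rfl | rfl
        · exact Or.inl rfl
        · exact Or.inr rfl
      · rintro (rfl | rfl)
        · exact ⟨hinsRoom Y hY a ha ((hiff a ha).2 (Or.inl rfl)), Finset.subset_insert _ _⟩
        · exact ⟨hinsRoom Y hY b hb ((hiff b hb).2 (Or.inr rfl)), Finset.subset_insert _ _⟩
  -- The exceptional door consists of slacks only and is extended solely by the `i₀`-largest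
  -- non-slack.
  have hdoor1 : (Finset.bipartiteAbove (fun Y X => Y ⊆ X) rooms Y₀).card = 1 := by
    obtain ⟨t, ht, htmax⟩ := Finset.exists_max_image
      (Finset.univ.filter fun w => w ∉ Set.range s) (u i₀) ⟨w₀, by simpa using hw₀⟩
    rw [Finset.mem_filter] at ht
    have ht := ht.2
    have htmax : ∀ w, w ∉ Set.range s → u i₀ w ≤ u i₀ t := fun w hw =>
      htmax w (Finset.mem_filter.2 ⟨Finset.mem_univ _, hw⟩)
    have htY : t ∉ Y₀ := fun h => by
      obtain ⟨j, -, hj⟩ := Finset.mem_image.1 h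
      exact ht ⟨j, hj⟩
    rw [Finset.card_eq_one]
    refine ⟨insert t Y₀, ?_⟩
    ext X
    simp only [Finset.mem_bipartiteAbove, Finset.mem_singleton]
    constructor
    · rintro ⟨hX, hYX⟩
      obtain ⟨y, hy, rfl⟩ := hdoorRoom Y₀ hY₀d X hX hYX
      simp only [hrooms, Finset.mem_filter, Finset.mem_univ, true_and] at hX
      obtain ⟨l, hl⟩ := hX.2.1 t
      have hnot : ∀ l, ¬ u l t ≤ u l (s l) := fun l h =>
        ht ⟨l, hu l (le_antisymm (hs l t) h)⟩
      have hli : l = i₀ := by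
        by_contra hli
        refine hnot l (hl (s l) (Finset.mem_insert_of_mem ?_))
        exact Finset.mem_image_of_mem s (by simpa using hli)
      subst hli
      have h1 := hl y (Finset.mem_insert_self _ _)
      have hyr : y ∉ Set.range s := by
        rintro ⟨j, rfl⟩
        by_cases hj : j = l
        · rw [hj] at h1; exact hnot l h1
        · exact hy (Finset.mem_image_of_mem s (by simpa using hj))
      rw [hu l (le_antisymm h1 (htmax y hyr))]
    · rintro rfl
      refine ⟨hinsRoom Y₀ hY₀d t htY ?_, Finset.subset_insert _ _⟩
      intro z
      by_cases hz : z ∈ Set.range s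
      · obtain ⟨j, rfl⟩ := hz
        exact ⟨j, fun x _ => hs j x⟩
      · refine ⟨i₀, fun x hx => ?_⟩
        rcases Finset.mem_insert.1 hx with rfl | hx
        · exact htmax z hz
        · obtain ⟨j, hj, rfl⟩ := Finset.mem_image.1 hx
          exact (hs' i₀ j z hz (Finset.ne_of_mem_erase hj).symm).le
  rw [Finset.sum_congr rfl hroom2, ← Finset.add_sum_erase _ _ hY₀d, hdoor1,
    Finset.sum_congr rfl (fun Y hY => hdoor2 Y (Finset.mem_of_mem_erase hY)
      (Finset.ne_of_mem_erase hY))] at hcount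
  simp only [Finset.sum_const, smul_eq_mul] at hcount
  omega

end Scarf

/-! ### Brouwer's fixed point theorem on the simplex -/

section Brouwer

variable {I : Type*} [Fintype I]

/-- The points of the simplex with coordinates in `(1/k) ℤ`, scaled by `k`. -/
abbrev Grid (I : Type*) [Fintype I] (k : ℕ) :=
  {x : I → Fin (k + 1) // ∑ i, (x i : ℕ) = k}

/-- In every colouring of the grid there is a point `x` near which each colour `i` occurs, except
possibly the colours `i` for which `x i` is small. -/
theorem grid_coloring [Nonempty I] (k : ℕ) (c : Grid I k → I) :
    ∃ x : Grid I k, ∀ i, (x.1 i : ℕ) ≤ Fintype.card I ∨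
      ∃ x' : Grid I k, c x' = i ∧ ∀ l, (x.1 l : ℕ) ≤ x'.1 l + Fintype.card I ∧
        (x'.1 l : ℕ) ≤ x.1 l + Fintype.card I := by
  classical
  obtain ⟨i₀⟩ := ‹Nonempty I›
  set N := Fintype.card (Grid I k) with hN
  let e : Grid I k ≃ Fin N := Fintype.equivFin _
  let e' : I ≃ Fin (Fintype.card I) := Fintype.equivFin _
  -- A coordinate order with ties broken by `e`; slacks are placed at the two ends.
  let u : I → Grid I k ⊕ I → ℕ := fun i => Sum.elim
    (fun x => 1 + (x.1 i * N + e x)) (fun j => if j = i then 0 else 1 + ((k + 1) * N + e' j))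
  have hlt : ∀ i (x : Grid I k), x.1 i * N + e x < (k + 1) * N := by
    intro i x
    have h1 : (x.1 i : ℕ) + 1 ≤ k + 1 := (x.1 i).2
    have h2 := (e x).2
    calc (x.1 i : ℕ) * N + e x < x.1 i * N + N := by omega
      _ = (x.1 i + 1) * N := by ring
      _ ≤ _ := Nat.mul_le_mul_right _ h1
  have hu : ∀ i, Function.Injective (u i) := by
    intro i a b hab
    rcases a with x | j <;> rcases b with y | l
    · simp only [u, Sum.elim_inl] at hab
      have hx := (e x).2
      have hy := (e y).2
      have h1 : (x.1 i * N + e x) % N = (y.1 i * N + e y) % N := by congr 1; omega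
      rw [Nat.mul_add_mod_of_lt hx, Nat.mul_add_mod_of_lt hy] at h1
      rw [e.injective (Fin.ext h1)]
    · simp only [u, Sum.elim_inl, Sum.elim_inr] at hab
      have := hlt i x
      split_ifs at hab <;> omega
    · simp only [u, Sum.elim_inl, Sum.elim_inr] at hab
      have := hlt i y
      split_ifs at hab <;> omega
    · simp only [u, Sum.elim_inr] at hab
      split_ifs at hab with h1 h2 h2
      · rw [h1, h2]
      · omega
      · omega
      · rw [e'.injective (Fin.ext (by omega : (e' j : ℕ) = e' l))]
  have hgrid : ∀ y : I → ℕ, ∑ i, y i = k → ∃ x : Grid I k, ∀ i, (x.1 i : ℕ) = y i := by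
    intro y hy
    have hle : ∀ i, y i < k + 1 := fun i => by
      have := Finset.single_le_sum (f := y) (fun _ _ => Nat.zero_le _) (Finset.mem_univ i)
      omega
    exact ⟨⟨fun i => ⟨y i, hle i⟩, hy⟩, fun i => rfl⟩
  obtain ⟨x₀, -⟩ := hgrid (fun i => if i = i₀ then k else 0) (by simp)
  obtain ⟨X, hX, hXc⟩ := scarf hu (s := Sum.inr) (c := Sum.elim c id) (w₀ := Sum.inl x₀)
    (by intro i w; simp [u])
    (by
      rintro i j (x | l) hw hij
      · have := hlt i x
        simp only [u, Sum.elim_inl, Sum.elim_inr, if_neg hij.symm]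
        omega
      · exact absurd ⟨l, rfl⟩ hw)
    (by simp) (by simp) i₀
  -- `C` is the set of colours carried by grid points of `X` rather than by slacks.
  set C : Finset I := Finset.univ.filter fun i => Sum.inr i ∉ X with hC
  have hrep : ∀ i ∈ C, ∃ x : Grid I k, Sum.inl x ∈ X ∧ c x = i := by
    intro i hi
    have h1 : i ∈ X.image (Sum.elim c id) := by rw [hXc]; exact Finset.mem_univ i
    obtain ⟨w, hw, hwi⟩ := Finset.mem_image.1 h1
    rcases w with x | j
    · exact ⟨x, hw, hwi⟩
    · simp only [Sum.elim_inr, id] at hwi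
      subst hwi
      exact absurd hw (Finset.mem_filter.1 hi).2
  have hdom : ∀ y : Grid I k, ∃ i ∈ C, ∀ x : Grid I k, Sum.inl x ∈ X →
      (y.1 i : ℕ) ≤ x.1 i := by
    intro y
    obtain ⟨i, hi⟩ := hX (Sum.inl y)
    refine ⟨i, ?_, ?_⟩
    · refine Finset.mem_filter.2 ⟨Finset.mem_univ i, fun h => ?_⟩
      have := hi _ h
      simp [u] at this
    · intro x hx
      have h1 := hi _ hx
      simp only [u, Sum.elim_inl] at h1
      have h2 := (e x).2
      by_contra hlt
      push Not at hlt
      have h3 : ((x.1 i : ℕ) + 1) * N ≤ y.1 i * N := Nat.mul_le_mul_right _ hlt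
      rw [add_mul] at h3
      omega
  obtain ⟨i₁, hi₁, -⟩ := hdom x₀
  obtain ⟨x₁, hx₁, -⟩ := hrep i₁ hi₁
  have hmin : ∀ i, ∃ z : Grid I k, Sum.inl z ∈ X ∧
      ∀ x : Grid I k, Sum.inl x ∈ X → (z.1 i : ℕ) ≤ x.1 i := by
    intro i
    have := Finset.exists_min_image
      (Finset.univ.filter fun x : Grid I k => Sum.inl x ∈ X) (fun x => (x.1 i : ℕ))
      ⟨x₁, by simpa using hx₁⟩
    simpa using this
  choose z hzX hz using hmin
  have hsum : k < ∑ i ∈ C, ((z i).1 i : ℕ) + Fintype.card I := by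
    by_contra hle
    push Not at hle
    have hCc : C.card ≤ Fintype.card I := Finset.card_le_univ C
    set r := k - ∑ i ∈ C, (((z i).1 i : ℕ) + 1) with hr
    have hs : ∑ i ∈ C, (((z i).1 i : ℕ) + 1) ≤ k := by
      rw [Finset.sum_add_distrib]; simp; omega
    obtain ⟨y, hy⟩ := hgrid (fun i => (if i ∈ C then ((z i).1 i : ℕ) + 1 else 0) +
      if i = i₁ then r else 0) (by
        rw [Finset.sum_add_distrib, Finset.sum_ite_mem]
        simp only [Finset.univ_inter, Finset.sum_ite_eq', Finset.mem_univ, if_true]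
        omega)
    obtain ⟨i, hi, hyi⟩ := hdom y
    have := hyi (z i) (hzX i)
    rw [hy, if_pos hi] at this
    omega
  have hxs : ∀ x : Grid I k, Sum.inl x ∈ X → ∀ i,
      (x.1 i : ℕ) ≤ (if i ∈ C then ((z i).1 i : ℕ) else 0) + Fintype.card I := by
    intro x hx i
    have hle : ∀ i, (if i ∈ C then ((z i).1 i : ℕ) else 0) ≤ x.1 i := by
      intro i
      split_ifs
      · exact hz i x hx
      · exact Nat.zero_le _
    have h1 := x.2
    have h2 : ∑ i ∈ C, ((z i).1 i : ℕ) = ∑ i, if i ∈ C then ((z i).1 i : ℕ) else 0 := by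
      rw [Finset.sum_ite_mem]; simp
    rw [h2] at hsum
    rw [← Finset.add_sum_erase _ _ (Finset.mem_univ i)] at h1 hsum
    have h3 := Finset.sum_le_sum (s := Finset.univ.erase i) fun l _ => hle l
    omega
  refine ⟨x₁, fun i => ?_⟩
  by_cases hi : i ∈ C
  · right
    obtain ⟨x', hx', hc'⟩ := hrep i hi
    refine ⟨x', hc', fun l => ?_⟩
    have h1 := hxs x₁ hx₁ l
    have h2 := hxs x' hx' l
    split_ifs at h1 h2
    · have := hz l x₁ hx₁
      have := hz l x' hx'
      omega
    · omega
  · left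
    have := hxs x₁ hx₁ i
    rw [if_neg hi] at this
    omega

/-- **Brouwer's fixed point theorem** for the standard simplex. -/
theorem brouwer_stdSimplex [Nonempty I] (F : stdSimplex ℝ I → stdSimplex ℝ I)
    (hF : Continuous F) : ∃ x, F x = x := by
  classical
  have : CompactSpace (stdSimplex ℝ I) := isCompact_iff_compactSpace.1 (isCompact_stdSimplex ℝ I)
  -- `x` and `F x` have the same coordinate sum, so not every coordinate strictly decreases.
  have hcol : ∀ x : stdSimplex ℝ I, ∃ i, x.1 i ≤ (F x).1 i := by
    intro x
    by_contra hcon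
    push Not at hcon
    have := Finset.sum_lt_sum_of_nonempty Finset.univ_nonempty fun i _ => hcon i
    rw [(F x).2.2, x.2.2] at this
    exact lt_irrefl _ this
  have happ : ∀ ε > 0, ∃ x : stdSimplex ℝ I, ∀ i, x.1 i - ε ≤ (F x).1 i := by
    intro ε hε
    have huc := CompactSpace.uniformContinuous_of_continuous hF
    obtain ⟨δ, hδ, hδF⟩ := Metric.uniformContinuous_iff.1 huc (ε / 2) (by positivity)
    obtain ⟨k, hk⟩ := exists_nat_gt (Fintype.card I / min δ (ε / 2))
    have hmin : 0 < min δ (ε / 2) := by positivity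
    have hk0 : (0 : ℝ) < k := lt_of_le_of_lt (by positivity) hk
    have hdk : (Fintype.card I : ℝ) / k < min δ (ε / 2) := by
      rw [div_lt_iff₀ hmin] at hk
      rw [div_lt_iff₀ hk0]; linarith
    have hdk1 := hdk.trans_le (min_le_left _ _)
    have hdk2 := hdk.trans_le (min_le_right _ _)
    let q : Grid I k → stdSimplex ℝ I := fun x => ⟨fun i => (x.1 i : ℝ) / k,
      fun i => by positivity, by
        rw [← Finset.sum_div, div_eq_one_iff_eq hk0.ne']
        exact_mod_cast x.2⟩
    choose c hc using hcol
    obtain ⟨x, hx⟩ := grid_coloring k fun x => c (q x)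
    refine ⟨q x, fun i => ?_⟩
    rcases hx i with h | ⟨x', hx', hnear⟩
    · have h1 : (q x).1 i ≤ Fintype.card I / k := by
        change ((x.1 i : ℕ) : ℝ) / k ≤ _
        gcongr
      have := (F (q x)).2.1 i
      linarith
    · have hco : ∀ l, |(q x).1 l - (q x').1 l| ≤ Fintype.card I / k := by
        intro l
        change |((x.1 l : ℕ) : ℝ) / k - ((x'.1 l : ℕ) : ℝ) / k| ≤ _
        rw [← sub_div, abs_div, abs_of_pos hk0]
        gcongr
        have h1 : ((x.1 l : ℕ) : ℝ) ≤ (x'.1 l : ℕ) + (Fintype.card I : ℕ) := by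
          exact_mod_cast (hnear l).1
        have h2 : ((x'.1 l : ℕ) : ℝ) ≤ (x.1 l : ℕ) + (Fintype.card I : ℕ) := by
          exact_mod_cast (hnear l).2
        rw [abs_le]; constructor <;> linarith
      have hd : dist (q x) (q x') < δ := by
        rw [Subtype.dist_eq, dist_pi_lt_iff hδ]
        intro l
        exact (hco l).trans_lt hdk1
      have h1 := (dist_pi_lt_iff (by positivity)).1 (hδF hd) i
      rw [Real.dist_eq, abs_lt] at h1
      have h2 := hc (q x')
      rw [hx'] at h2
      have h3 := abs_le.1 (hco i)
      linarith [h1.1, h3.2]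
  have : Nonempty (stdSimplex ℝ I) := (happ 1 one_pos).nonempty
  have hFc : ∀ i, Continuous fun x : stdSimplex ℝ I => (F x).1 i := fun i =>
    (continuous_apply i).comp (continuous_subtype_val.comp hF)
  have hxc : ∀ i, Continuous fun x : stdSimplex ℝ I => x.1 i := fun i =>
    (continuous_apply i).comp continuous_subtype_val
  obtain ⟨x, -, hx⟩ := isCompact_univ.exists_isMinOn Set.univ_nonempty
    (f := fun x : stdSimplex ℝ I => ∑ i, max 0 (x.1 i - (F x).1 i))
    (continuous_finsetSum _ fun i _ =>
      continuous_const.max ((hxc i).sub (hFc i))).continuousOn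
  have hcard : (0 : ℝ) < Fintype.card I := by exact_mod_cast Fintype.card_pos
  have hle : ∑ i, max 0 (x.1 i - (F x).1 i) ≤ 0 := by
    refine le_of_forall_pos_le_add fun ε hε => ?_
    obtain ⟨y, hy⟩ := happ (ε / Fintype.card I) (by positivity)
    have h1 : ∑ i, max 0 (x.1 i - (F x).1 i) ≤ ∑ i, max 0 (y.1 i - (F y).1 i) :=
      hx (Set.mem_univ y)
    have h2 : ∑ i, max 0 (y.1 i - (F y).1 i) ≤ ∑ _i : I, ε / Fintype.card I :=
      Finset.sum_le_sum fun i _ => max_le (by positivity) (by linarith [hy i])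
    rw [Finset.sum_const, Finset.card_univ, nsmul_eq_mul, mul_div_cancel₀ _ hcard.ne'] at h2
    linarith
  have hxF : ∀ i, x.1 i ≤ (F x).1 i := by
    intro i
    have h1 := Finset.single_le_sum (f := fun i => max 0 (x.1 i - (F x).1 i))
      (fun _ _ => le_max_left _ _) (Finset.mem_univ i)
    have h2 := (le_max_right 0 (x.1 i - (F x).1 i)).trans (h1.trans hle)
    linarith
  refine ⟨x, Subtype.ext (funext fun i => ?_)⟩
  have := (Finset.sum_eq_sum_iff_of_le fun i _ => hxF i).1 (by rw [(F x).2.2, x.2.2])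
  exact (this i (Finset.mem_univ i)).symm

end Brouwer

/-! ### Values, deviations and the map `f` -/

namespace SG

variable {n S : ℕ} {A : Fin n → ℕ}

/-- The right-hand side of agent `i`'s Bellman equation under `π`, applied to `v`. -/
noncomputable def bell (g : SG n S A) (π : Profile n S A) (i : Fin n) (v : Fin S → ℝ)
    (s : Fin S) : ℝ :=
  ∑ a, jointProb π s a * (g.r i s a + g.γ * ∑ s', g.P s a s' * v s')

theorem bell_eq (g : SG n S A) (π : Profile n S A) (i : Fin n) (v : Fin S → ℝ) (s : Fin S) :
    g.bell π i v s = g.rvec π i s + g.γ * ∑ s', g.Pmat π s s' * v s' := by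
  simp only [bell, rvec, Pmat, mul_add, Finset.sum_add_distrib, Finset.sum_mul, Finset.mul_sum]
  congr 1
  rw [Finset.sum_comm]
  refine Finset.sum_congr rfl fun s' _ => Finset.sum_congr rfl fun a _ => by ring

theorem jointProb_nonneg {π : Profile n S A} (h : IsProfile π) (s : Fin S) (a) :
    0 ≤ jointProb π s a := Finset.prod_nonneg fun i _ => h.1 i s (a i)

theorem jointProb_sum {π : Profile n S A} (h : IsProfile π) (s : Fin S) :
    ∑ a, jointProb π s a = 1 := by
  unfold jointProb
  rw [← Fintype.prod_sum (fun i (b : Fin (A i)) => π i s b)]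
  simp [h.2]

theorem Pmat_nonneg (g : SG n S A) {π : Profile n S A} (h : IsProfile π) (s s') :
    0 ≤ g.Pmat π s s' :=
  Finset.sum_nonneg fun a _ => mul_nonneg (jointProb_nonneg h s a) (g.P_nonneg s a s')

theorem Pmat_sum (g : SG n S A) {π : Profile n S A} (h : IsProfile π) (s) :
    ∑ s', g.Pmat π s s' = 1 := by
  unfold Pmat
  rw [Finset.sum_comm]
  simp [← Finset.mul_sum, g.P_sum_one, jointProb_sum h]

/-- Maximum principle for the discounted chain: a subsolution of `d = γ P^π d` is nonpositive. -/
theorem max_principle (g : SG n S A) {π : Profile n S A} (h : IsProfile π) {d : Fin S → ℝ}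
    (hd : ∀ s, d s ≤ g.γ * ∑ s', g.Pmat π s s' * d s') (s : Fin S) : d s ≤ 0 := by
  obtain ⟨m, -, hm⟩ := Finset.exists_max_image Finset.univ d ⟨s, Finset.mem_univ s⟩
  have h1 : ∑ s', g.Pmat π m s' * d s' ≤ d m := by
    calc ∑ s', g.Pmat π m s' * d s' ≤ ∑ s', g.Pmat π m s' * d m :=
          Finset.sum_le_sum fun s' hs' => mul_le_mul_of_nonneg_left (hm s' hs')
            (g.Pmat_nonneg h m s')
      _ = d m := by rw [← Finset.sum_mul, g.Pmat_sum h, one_mul]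
  have h2 := (hd m).trans (mul_le_mul_of_nonneg_left h1 g.γ_nonneg)
  have h3 := hm s (Finset.mem_univ s)
  nlinarith [g.γ_lt_one]

theorem det_ne_zero (g : SG n S A) {π : Profile n S A} (h : IsProfile π) :
    (1 - g.γ • g.Pmat π).det ≠ 0 := by
  intro h0
  obtain ⟨v, hv, hv0⟩ := Matrix.exists_mulVec_eq_zero_iff.2 h0
  have key : ∀ s, v s = g.γ * ∑ s', g.Pmat π s s' * v s' := by
    intro s
    have := congrFun hv0 s
    rw [Matrix.sub_mulVec, Matrix.one_mulVec, Matrix.smul_mulVec] at this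
    simp only [Pi.sub_apply, Pi.smul_apply, smul_eq_mul, Pi.zero_apply, Matrix.mulVec,
      dotProduct] at this
    linarith
  refine hv (funext fun s => le_antisymm (g.max_principle h (fun s => (key s).le) s) ?_)
  have := g.max_principle h (d := fun s => - v s) (fun s => by
    simp only [mul_neg, Finset.sum_neg_distrib]; linarith [key s]) s
  simpa using this

theorem V_bell (g : SG n S A) {π : Profile n S A} (h : IsProfile π) (i : Fin n) (s : Fin S) :
    g.V π i s = g.bell π i (g.V π i) s := by
  have h1 : Matrix.mulVec (1 - g.γ • g.Pmat π) (g.V π i) = g.rvec π i := by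
    rw [V, Matrix.mulVec_mulVec, Matrix.mul_nonsing_inv _ (g.det_ne_zero h).isUnit,
      Matrix.one_mulVec]
  have := congrFun h1 s
  rw [Matrix.sub_mulVec, Matrix.one_mulVec, Matrix.smul_mulVec] at this
  simp only [Pi.sub_apply, Pi.smul_apply, smul_eq_mul, Matrix.mulVec, dotProduct] at this
  rw [bell_eq]
  linarith

theorem bell_sub (g : SG n S A) (π : Profile n S A) (i : Fin n) (v w : Fin S → ℝ) (s : Fin S) :
    g.bell π i v s - g.bell π i w s = g.γ * ∑ s', g.Pmat π s s' * (v s' - w s') := by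
  rw [bell_eq, bell_eq]
  simp only [mul_sub, Finset.sum_sub_distrib]
  ring

/-- Comparison principle: a supersolution of the Bellman equation bounds the value above. -/
theorem V_le_of_bell_le (g : SG n S A) {π : Profile n S A} (h : IsProfile π) (i : Fin n)
    {w : Fin S → ℝ} (hw : ∀ s, g.bell π i w s ≤ w s) (s : Fin S) : g.V π i s ≤ w s := by
  have := g.max_principle h (d := fun s => g.V π i s - w s) (fun s => by
    rw [← g.bell_sub, ← g.V_bell h]; linarith [hw s]) s
  linarith

/-- Comparison principle: a subsolution of the Bellman equation bounds the value below. -/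
theorem le_V_of_le_bell (g : SG n S A) {π : Profile n S A} (h : IsProfile π) (i : Fin n)
    {w : Fin S → ℝ} (hw : ∀ s, w s ≤ g.bell π i w s) (s : Fin S) : w s ≤ g.V π i s := by
  have := g.max_principle h (d := fun s => w s - g.V π i s) (fun s => by
    rw [← g.bell_sub, ← g.V_bell h]; linarith [hw s]) s
  linarith

theorem isProfile_update {π : Profile n S A} (h : IsProfile π) {i : Fin n}
    {σ : Fin S → Fin (A i) → ℝ} (hσ : (∀ t b, 0 ≤ σ t b) ∧ ∀ t, ∑ b, σ t b = 1) :
    IsProfile (Function.update π i σ) := by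
  constructor
  · intro j s a
    by_cases hj : j = i
    · subst hj; simpa using hσ.1 s a
    · simpa [Function.update_of_ne hj] using h.1 j s a
  · intro j s
    by_cases hj : j = i
    · subst hj; simpa using hσ.2 s
    · simpa [Function.update_of_ne hj] using h.2 j s

theorem isProfile_dev {π : Profile n S A} (h : IsProfile π) (i : Fin n) (s : Fin S)
    (a : Fin (A i)) : IsProfile (devProfile π i s a) := by
  refine isProfile_update h ⟨fun t b => ?_, fun t => ?_⟩
  · split_ifs
    · exact zero_le_one
    · exact le_rfl
    · exact h.1 i t b
  · by_cases ht : t = s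
    · simp [ht]
    · simp [ht, h.2]

theorem jointProb_update (π : Profile n S A) (i : Fin n) (σ : Fin S → Fin (A i) → ℝ) (s : Fin S)
    (a : ∀ i, Fin (A i)) :
    jointProb (Function.update π i σ) s a =
      σ s (a i) * ∏ j ∈ Finset.univ.erase i, π j s (a j) := by
  unfold jointProb
  rw [← Finset.mul_prod_erase _ _ (Finset.mem_univ i), Function.update_self]
  congr 1
  refine Finset.prod_congr rfl fun j hj => ?_
  rw [Function.update_of_ne (Finset.ne_of_mem_erase hj)]

/-- At the state `s`, a strategy of agent `i` is the mixture of the pure deviations at `s`. -/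
theorem bell_update (g : SG n S A) (π : Profile n S A) (i : Fin n) (σ : Fin S → Fin (A i) → ℝ)
    (v : Fin S → ℝ) (s : Fin S) :
    g.bell (Function.update π i σ) i v s =
      ∑ b, σ s b * g.bell (devProfile π i s b) i v s := by
  simp only [bell, Finset.mul_sum]
  rw [Finset.sum_comm]
  refine Finset.sum_congr rfl fun a _ => ?_
  simp only [devProfile, jointProb_update]
  simp [mul_assoc]

theorem bell_dev_of_ne (g : SG n S A) (π : Profile n S A) (i : Fin n) {s t : Fin S} (ht : t ≠ s)
    (b : Fin (A i)) (v : Fin S → ℝ) :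
    g.bell (devProfile π i s b) i v t = g.bell π i v t := by
  have h := jointProb_update π i (π i) t
  rw [Function.update_eq_self] at h
  simp only [bell, devProfile, jointProb_update, h, if_neg ht]

/-- The long-run gain from a pure deviation at `s` is positive exactly when its one-shot gain
is. -/
theorem V_lt_Vdev_iff (g : SG n S A) {π : Profile n S A} (h : IsProfile π) (i : Fin n)
    (s : Fin S) (a : Fin (A i)) :
    g.V π i s < g.Vdev π i s a ↔ g.V π i s < g.bell (devProfile π i s a) i (g.V π i) s := by
  have hdev := isProfile_dev h i s a
  have hne : ∀ t, t ≠ s → g.bell (devProfile π i s a) i (g.V π i) t = g.V π i t := fun t ht => by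
    rw [bell_dev_of_ne g π i ht, ← g.V_bell h]
  constructor
  · intro hlt
    by_contra hle
    push Not at hle
    refine absurd (g.V_le_of_bell_le hdev i (w := g.V π i) (fun t => ?_) s) (not_le.2 hlt)
    by_cases ht : t = s
    · rw [ht]; exact hle
    · exact (hne t ht).le
  · intro hlt
    have hge : ∀ t, g.V π i t ≤ g.V (devProfile π i s a) i t :=
      g.le_V_of_le_bell hdev i fun t => by
        by_cases ht : t = s
        · rw [ht]; exact hlt.le
        · exact (hne t ht).ge
    have hsub := g.bell_sub (devProfile π i s a) i (g.V (devProfile π i s a) i) (g.V π i) s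
    have hnn : 0 ≤ g.γ * ∑ s', g.Pmat (devProfile π i s a) s s' *
        (g.V (devProfile π i s a) i s' - g.V π i s') :=
      mul_nonneg g.γ_nonneg (Finset.sum_nonneg fun s' _ =>
        mul_nonneg (g.Pmat_nonneg hdev s s') (sub_nonneg.2 (hge s')))
    rw [← g.V_bell hdev] at hsub
    unfold Vdev
    linarith

theorem D_nonneg (g : SG n S A) (π : Profile n S A) (i s a) : 0 ≤ g.D π i s a := le_max_left _ _

theorem D_pos_iff (g : SG n S A) {π : Profile n S A} (h : IsProfile π) (i s a) :
    0 < g.D π i s a ↔ g.V π i s < g.bell (devProfile π i s a) i (g.V π i) s := by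
  rw [← g.V_lt_Vdev_iff h]; simp [D]

theorem V_mix (g : SG n S A) {π : Profile n S A} (h : IsProfile π) (i s) :
    g.V π i s = ∑ b, π i s b * g.bell (devProfile π i s b) i (g.V π i) s := by
  rw [← bell_update, Function.update_eq_self, ← g.V_bell h]

theorem isMPE_of_fixed (g : SG n S A) {π : Profile n S A} (h : IsProfile π) (hf : g.f π = π) :
    g.IsMPE π := by
  have hD : ∀ i s a, g.D π i s a = 0 := by
    intro i s
    set T := ∑ b, g.D π i s b with hT
    have hT0 : 0 ≤ T := Finset.sum_nonneg fun b _ => g.D_nonneg π i s b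
    have hfix : ∀ a, g.D π i s a = π i s a * T := by
      intro a
      have h1 := congrFun (congrFun (congrFun hf i) s) a
      rw [f, ← hT, div_eq_iff (by positivity)] at h1
      linarith
    rcases hT0.eq_or_lt with h0 | hpos
    · intro a; rw [hfix, ← h0, mul_zero]
    · exfalso
      -- Every action in the support would strictly improve on `V`, the mean over the support.
      have hle : ∀ b, π i s b * g.V π i s ≤
          π i s b * g.bell (devProfile π i s b) i (g.V π i) s := by
        intro b
        rcases (h.1 i s b).eq_or_lt with hb | hb
        · simp [← hb]
        · exact mul_le_mul_of_nonneg_left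
            ((g.D_pos_iff h i s b).1 (by rw [hfix]; positivity)).le hb.le
      obtain ⟨b, -, hb⟩ : ∃ b ∈ Finset.univ, (0 : ℝ) < π i s b := by
        apply Finset.exists_lt_of_sum_lt
        simp [h.2]
      have hlt := Finset.sum_lt_sum (fun b _ => hle b) ⟨b, Finset.mem_univ _,
        mul_lt_mul_of_pos_left ((g.D_pos_iff h i s b).1 (by rw [hfix]; positivity)) hb⟩
      rw [← g.V_mix h, ← Finset.sum_mul, h.2, one_mul] at hlt
      exact lt_irrefl _ hlt
  intro s i σ hσ
  refine g.V_le_of_bell_le (isProfile_update h hσ) i (fun t => ?_) s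
  rw [bell_update]
  calc ∑ b, σ t b * g.bell (devProfile π i t b) i (g.V π i) t
      ≤ ∑ b, σ t b * g.V π i t := Finset.sum_le_sum fun b _ =>
        mul_le_mul_of_nonneg_left (not_lt.1 fun hlt =>
          ((g.D_pos_iff h i t b).2 hlt).ne' (hD i t b)) (hσ.1 t b)
    _ = g.V π i t := by rw [← Finset.sum_mul, hσ.2, one_mul]

theorem isProfile_f (g : SG n S A) {π : Profile n S A} (h : IsProfile π) :
    IsProfile (g.f π) := by
  have hpos : ∀ i s, 0 < 1 + ∑ b, g.D π i s b := fun i s =>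
    add_pos_of_pos_of_nonneg one_pos (Finset.sum_nonneg fun b _ => g.D_nonneg π i s b)
  refine ⟨fun i s a => div_nonneg (add_nonneg (h.1 i s a) (g.D_nonneg π i s a)) (hpos i s).le,
    fun i s => ?_⟩
  simp only [f]
  rw [← Finset.sum_div, Finset.sum_add_distrib, h.2, div_self (hpos i s).ne']

theorem continuous_V (g : SG n S A) {X : Type*} [TopologicalSpace X] {p : X → Profile n S A}
    (hp : Continuous p) (h : ∀ x, IsProfile (p x)) (i : Fin n) (s : Fin S) :
    Continuous fun x => g.V (p x) i s := by
  have hj : ∀ s a, Continuous fun x => jointProb (p x) s a := fun s a => by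
    unfold jointProb; fun_prop
  have hP : Continuous fun x => (1 - g.γ • g.Pmat (p x)) := by
    refine continuous_const.sub (Continuous.fun_const_smul ?_ _)
    refine continuous_matrix fun s s' => ?_
    unfold Pmat
    exact continuous_finsetSum _ fun a _ => (hj s a).mul continuous_const
  have hr : ∀ s, Continuous fun x => g.rvec (p x) i s := fun s => by
    unfold rvec
    exact continuous_finsetSum _ fun a _ => (hj s a).mul continuous_const
  simp only [V, Matrix.inv_def, Ring.inverse_eq_inv', Matrix.mulVec, dotProduct,
    Matrix.smul_apply, smul_eq_mul]
  refine continuous_finsetSum _ fun s' _ => Continuous.mul (Continuous.mul ?_ ?_) (hr s')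
  · exact hP.matrix_det.inv₀ fun x => g.det_ne_zero (h x)
  · exact hP.matrix_adjugate.matrix_elem s s'

theorem continuous_f (g : SG n S A) {X : Type*} [TopologicalSpace X] {p : X → Profile n S A}
    (hp : Continuous p) (h : ∀ x, IsProfile (p x)) : Continuous fun x => g.f (p x) := by
  have hD : ∀ i s a, Continuous fun x => g.D (p x) i s a := by
    intro i s a
    refine continuous_const.max (Continuous.sub ?_ (g.continuous_V hp h i s))
    refine g.continuous_V (p := fun x => devProfile (p x) i s a) ?_
      (fun x => isProfile_dev (h x) i s a) i s
    unfold devProfile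
    refine hp.update i (continuous_pi fun t => continuous_pi fun b => ?_)
    split_ifs <;> fun_prop
  refine continuous_pi fun i => continuous_pi fun s => continuous_pi fun a => ?_
  unfold f
  refine Continuous.div ?_ ?_ fun x => ?_
  · exact Continuous.add (by fun_prop) (hD i s a)
  · exact continuous_const.add (continuous_finsetSum _ fun b _ => hD i s b)
  · exact (add_pos_of_pos_of_nonneg one_pos
      (Finset.sum_nonneg fun b _ => g.D_nonneg (p x) i s b)).ne'

end SG

/-! ### The fixed point -/

namespace SG

variable {n S : ℕ} {A : Fin n → ℕ}

/-- A continuous retraction of the nonnegative vectors, indexed by agent, state and action, onto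
the strategy profiles: missing mass is spread evenly, excess mass is scaled away. -/
noncomputable def retr (x : (Σ i : Fin n, Fin S × Fin (A i)) → ℝ) : Profile n S A :=
  fun i s a => (x ⟨i, s, a⟩ + max 0 (1 - ∑ b, x ⟨i, s, b⟩) / A i) / max 1 (∑ b, x ⟨i, s, b⟩)

theorem continuous_retr :
    Continuous (retr : ((Σ i : Fin n, Fin S × Fin (A i)) → ℝ) → Profile n S A) := by
  refine continuous_pi fun i => continuous_pi fun s => continuous_pi fun a => ?_
  unfold retr
  refine Continuous.div (by fun_prop) (by fun_prop) fun x => ?_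
  exact (lt_max_of_lt_left one_pos).ne'

theorem isProfile_retr (hA : ∀ i, 0 < A i) {x : (Σ i : Fin n, Fin S × Fin (A i)) → ℝ}
    (hx : ∀ j, 0 ≤ x j) : IsProfile (retr x) := by
  refine ⟨fun i s a => ?_, fun i s => ?_⟩
  · have := hx ⟨i, s, a⟩
    unfold retr
    positivity
  · have hAi : (A i : ℝ) ≠ 0 := by exact_mod_cast (hA i).ne'
    simp only [retr]
    rw [← Finset.sum_div, Finset.sum_add_distrib, Finset.sum_const, Finset.card_univ,
      Fintype.card_fin, nsmul_eq_mul, mul_div_cancel₀ _ hAi]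
    set m := ∑ b, x ⟨i, s, b⟩
    rw [div_eq_one_iff_eq (lt_max_of_lt_left one_pos).ne']
    rcases le_total m 1 with h | h
    · rw [max_eq_right (sub_nonneg.2 h), max_eq_left h]; ring
    · rw [max_eq_left (sub_nonpos.2 h), max_eq_right h, add_zero]

theorem retr_of_isProfile {π : Profile n S A} (h : IsProfile π) :
    retr (fun j => π j.1 j.2.1 j.2.2) = π := by
  funext i s a
  simp [retr, h.2]

theorem exists_fixed (g : SG n S A) (hA : ∀ i, 0 < A i) :
    ∃ π : Profile n S A, IsProfile π ∧ g.f π = π := by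
  rcases Nat.eq_zero_or_pos n with rfl | hn
  · exact ⟨fun i => i.elim0, ⟨fun i => i.elim0, fun i => i.elim0⟩, funext fun i => i.elim0⟩
  rcases Nat.eq_zero_or_pos S with rfl | hS
  · exact ⟨fun _ s => s.elim0, ⟨fun _ s => s.elim0, fun _ s => s.elim0⟩,
      funext fun _ => funext fun s => s.elim0⟩
  have : Nonempty (Σ i : Fin n, Fin S × Fin (A i)) :=
    ⟨⟨⟨0, hn⟩, ⟨0, hS⟩, ⟨0, hA _⟩⟩⟩
  -- A profile has total mass `n * S`; dividing by it embeds the profiles in the simplex.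
  set N : ℝ := n * S with hN
  have hN0 : 0 < N := by positivity
  let p : stdSimplex ℝ (Σ i : Fin n, Fin S × Fin (A i)) → Profile n S A :=
    fun x => retr fun j => N * x.1 j
  have hp : ∀ x, IsProfile (p x) := fun x =>
    isProfile_retr hA fun j => mul_nonneg hN0.le (x.2.1 j)
  have hpc : Continuous p := continuous_retr.comp (continuous_pi fun j =>
    continuous_const.mul ((continuous_apply j).comp continuous_subtype_val))
  have hf : ∀ x, IsProfile (g.f (p x)) := fun x => g.isProfile_f (hp x)
  have hfc : Continuous fun x => g.f (p x) := g.continuous_f hpc hp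
  obtain ⟨x, hx⟩ := brouwer_stdSimplex
    (fun x => (⟨fun j => g.f (p x) j.1 j.2.1 j.2.2 / N,
      fun j => div_nonneg ((hf x).1 _ _ _) hN0.le, by
        rw [← Finset.sum_div, div_eq_one_iff_eq hN0.ne', Fintype.sum_sigma]
        simp only [Fintype.sum_prod_type, (hf x).2]
        simp [hN]⟩ : stdSimplex ℝ (Σ i : Fin n, Fin S × Fin (A i))))
    (by
      refine Continuous.subtype_mk (continuous_pi fun j => Continuous.div_const ?_ _) _
      exact (continuous_apply j.2.2).comp ((continuous_apply j.2.1).comp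
        ((continuous_apply j.1).comp hfc)))
  refine ⟨p x, hp x, ?_⟩
  have h1 : (fun j => N * x.1 j) =
      fun j : (Σ i : Fin n, Fin S × Fin (A i)) => g.f (p x) j.1 j.2.1 j.2.2 := by
    funext j
    have := congrFun (congrArg Subtype.val hx) j
    simp only at this
    rw [← this, mul_div_cancel₀ _ hN0.ne']
  calc g.f (p x) = retr (fun j => g.f (p x) j.1 j.2.1 j.2.2) := (retr_of_isProfile (hf x)).symm
    _ = p x := by rw [← h1]

end SG

open SG in
/-- `f` has at least one fixed point; consequently every finite
discounted stochastic game possesses a Markov perfect equilibrium. -/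
theorem exists_fixedPt_and_exists_mpe {n S : ℕ} {A : Fin n → ℕ} (g : SG n S A)
    (hA : ∀ i, 0 < A i) :
    (∃ π : Profile n S A, IsProfile π ∧ g.f π = π) ∧
    (∃ π : Profile n S A, IsProfile π ∧ g.IsMPE π) := by
  obtain ⟨π, hπ, hf⟩ := g.exists_fixed hA
  exact ⟨⟨π, hπ, hf⟩, π, hπ, g.isMPE_of_fixed hπ hf⟩
end

section
/- Let π₁, π₂ be strategy profiles of a finite discounted stochastic game with ‖π₁ − π₂‖∞ ≤ δ. Then for all states s, s' ∈ 𝕊, |P^{π₁}(s'|s) − P^{π₂}(s'|s)| ≤ nA_max δ. -/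
/-!
Since `0 ≤ P(s'|s,a) ≤ 1`, the difference of the two transition probabilities is at most the `ℓ¹`
distance between the joint action distributions at `s`. The joint distributions are products, so
this distance is at most the sum over the `n` agents of the `ℓ¹` distances of the individual
mixed actions (`sum_abs_prod_sub_prod_le`), and each of these is a sum of at most `A_max` terms,
each at most `δ`.
-/

open Finset

/-- Total variation is subadditive over product distributions: the `ℓ¹` distance of two products
is at most the sum of the `ℓ¹` distances of the factors. The induction splits off the first factor
by `p₀ P - q₀ Q = (p₀ - q₀) P + q₀ (P - Q)`. -/
theorem sum_abs_prod_sub_prod_le {n : ℕ} {A : Fin n → ℕ} (p q : ∀ i, Fin (A i) → ℝ)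
    (hp : ∀ i a, 0 ≤ p i a) (hp1 : ∀ i, ∑ a, p i a = 1)
    (hq : ∀ i a, 0 ≤ q i a) (hq1 : ∀ i, ∑ a, q i a = 1) :
    ∑ a : (∀ i, Fin (A i)), |∏ i, p i (a i) - ∏ i, q i (a i)| ≤ ∑ i, ∑ b, |p i b - q i b| := by
  induction n with
  | zero => simp
  | succ n ih =>
    have ih' := ih (fun i => p i.succ) (fun i => q i.succ) (fun i => hp i.succ)
      (fun i => hp1 i.succ) (fun i => hq i.succ) (fun i => hq1 i.succ)
    -- the product of the last `n` factors of `p` has total mass one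
    have hP1 : ∑ a : (∀ i : Fin n, Fin (A i.succ)), ∏ i, p i.succ (a i) = 1 := by
      rw [← Fintype.prod_sum]
      simp [hp1]
    rw [← (Fin.consEquiv (fun i => Fin (A i))).sum_comp, Fintype.sum_prod_type,
      Fin.sum_univ_succ]
    simp only [Fin.consEquiv_apply, Fin.prod_univ_succ, Fin.cons_zero, Fin.cons_succ]
    calc ∑ b : Fin (A 0), ∑ a : (∀ i : Fin n, Fin (A i.succ)),
          |p 0 b * ∏ i, p i.succ (a i) - q 0 b * ∏ i, q i.succ (a i)|
        ≤ ∑ b : Fin (A 0), ∑ a : (∀ i : Fin n, Fin (A i.succ)),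
          (|p 0 b - q 0 b| * ∏ i, p i.succ (a i)
            + q 0 b * |∏ i, p i.succ (a i) - ∏ i, q i.succ (a i)|) := by
          refine sum_le_sum fun b _ => sum_le_sum fun a _ => ?_
          have hP : 0 ≤ ∏ i, p i.succ (a i) := prod_nonneg fun i _ => hp _ _
          calc _ = |(p 0 b - q 0 b) * ∏ i, p i.succ (a i)
                + q 0 b * (∏ i, p i.succ (a i) - ∏ i, q i.succ (a i))| := by
                congr 1
                ring
            _ ≤ _ := by
                refine (abs_add_le _ _).trans_eq ?_
                rw [abs_mul, abs_mul, abs_of_nonneg hP, abs_of_nonneg (hq 0 b)]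
      _ = ∑ b, |p 0 b - q 0 b|
          + ∑ a : (∀ i : Fin n, Fin (A i.succ)),
            |∏ i, p i.succ (a i) - ∏ i, q i.succ (a i)| := by
          simp only [sum_add_distrib, ← mul_sum]
          rw [hP1, ← sum_mul, ← sum_mul, hq1]
          simp
      _ ≤ _ := by gcongr

open SG in
/-- `|P^{π₁}(s'|s) − P^{π₂}(s'|s)| ≤ n A_max δ`. -/
theorem abs_Pmat_diff_le {n S : ℕ} {A : Fin n → ℕ} (g : SG n S A)
    (π₁ π₂ : Profile n S A) (h₁ : IsProfile π₁) (h₂ : IsProfile π₂)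
    (δ : ℝ) (hδ : ∀ i s a, |π₁ i s a - π₂ i s a| ≤ δ) :
    ∀ s s' : Fin S, |g.Pmat π₁ s s' - g.Pmat π₂ s s'| ≤ (n : ℝ) * (Amax A : ℝ) * δ := by
  intro s s'
  have hP1 : ∀ a, g.P s a s' ≤ 1 := fun a => by
    rw [← g.P_sum_one s a]
    exact single_le_sum (f := fun t => g.P s a t) (fun t _ => g.P_nonneg s a t) (mem_univ s')
  calc |g.Pmat π₁ s s' - g.Pmat π₂ s s'|
      = |∑ a, (jointProb π₁ s a - jointProb π₂ s a) * g.P s a s'| := by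
        simp only [Pmat, ← sum_sub_distrib, sub_mul]
    _ ≤ ∑ a, |jointProb π₁ s a - jointProb π₂ s a| := by
        refine (abs_sum_le_sum_abs _ _).trans (sum_le_sum fun a _ => ?_)
        rw [abs_mul, abs_of_nonneg (g.P_nonneg s a s')]
        exact mul_le_of_le_one_right (abs_nonneg _) (hP1 a)
    _ ≤ ∑ i, ∑ b, |π₁ i s b - π₂ i s b| :=
        sum_abs_prod_sub_prod_le (fun i => π₁ i s) (fun i => π₂ i s) (fun i => h₁.1 i s)
          (fun i => h₁.2 i s) (fun i => h₂.1 i s) (fun i => h₂.2 i s)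
    _ ≤ ∑ _i : Fin n, (Amax A : ℝ) * δ := by
        refine sum_le_sum fun i _ => ?_
        -- agent `i` has at least one action because `π₁ i s` has mass one, so `0 ≤ δ`
        have hδ0 : 0 ≤ δ := by
          obtain ⟨b⟩ : Nonempty (Fin (A i)) := by
            by_contra h
            rw [not_nonempty_iff] at h
            simpa using h₁.2 i s
          exact (abs_nonneg _).trans (hδ i s b)
        have hA : (A i : ℝ) ≤ (Amax A : ℝ) := by
          exact_mod_cast le_sup (f := A) (mem_univ i)
        calc ∑ b, |π₁ i s b - π₂ i s b| ≤ ∑ _b : Fin (A i), δ := sum_le_sum fun b _ => hδ i s b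
          _ = (A i : ℝ) * δ := by simp
          _ ≤ (Amax A : ℝ) * δ := by gcongr
    _ = (n : ℝ) * (Amax A : ℝ) * δ := by simp [mul_assoc]
end
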